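/- (Logarithmic Gronwall lemma) Let Y : [0,T] → [0,∞) be C¹ and satisfy dY/dt ≤ Y + Y ln⁺Y on [0,T], where ln⁺(x) = 1 for x < e and ln⁺(x) = ln x for x ≥ e. Set Y_e(t) := e + Y(t). Then Y_e(t) ≤ exp(ln(Y_e(0)) · exp(2t)) for all t ∈ [0,T]. -/

import Mathlib

open Real Set

/-- `ln⁺(x) = 1` for `x < e` and `ln x` for `x ≥ e`. -/
noncomputable def lnPlus (x : ℝ) : ℝ := if x < Real.exp 1 then 1 else Real.log x

/-- Logarithmic Gronwall lemma: if `Y : [0,T] → [0,∞)` is `C¹` and satisfies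
`dY/dt ≤ Y + Y ln⁺ Y` on `[0,T]`, then with `Y_e := e + Y`,
`Y_e(t) ≤ exp(ln(Y_e(0)) · exp(2t))` for all `t ∈ [0,T]`. -/
theorem log_gronwall (T : ℝ) (hT : 0 < T) (Y Y' : ℝ → ℝ)
    (hderiv : ∀ t ∈ Icc 0 T, HasDerivAt Y (Y' t) t)
    (hY'cont : ContinuousOn Y' (Icc 0 T))
    (hYnonneg : ∀ t ∈ Icc 0 T, 0 ≤ Y t)
    (hineq : ∀ t ∈ Icc 0 T, Y' t ≤ Y t + Y t * lnPlus (Y t)) :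
    ∀ t ∈ Icc 0 T,
      Real.exp 1 + Y t ≤ Real.exp (Real.log (Real.exp 1 + Y 0) * Real.exp (2 * t)) := by
  have hpos : ∀ t ∈ Icc 0 T, 0 < Real.exp 1 + Y t := fun t ht =>
    add_pos_of_pos_of_nonneg (Real.exp_pos 1) (hYnonneg t ht)
  have hlog1 : ∀ t ∈ Icc 0 T, 1 ≤ Real.log (Real.exp 1 + Y t) := fun t ht => by
    rw [Real.le_log_iff_exp_le (hpos t ht)]
    linarith [hYnonneg t ht]
  have hln : ∀ t ∈ Icc 0 T, lnPlus (Y t) ≤ Real.log (Real.exp 1 + Y t) := fun t ht => by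
    unfold lnPlus
    split_ifs with h
    · exact hlog1 t ht
    · exact Real.log_le_log (lt_of_lt_of_le (Real.exp_pos 1) (not_lt.mp h))
        (by linarith [Real.exp_pos 1])
  have hkey : ∀ t ∈ Icc 0 T,
      Y' t / (Real.exp 1 + Y t) ≤ 2 * Real.log (Real.exp 1 + Y t) := fun t ht => by
    rw [div_le_iff₀ (hpos t ht)]
    have h1 := mul_le_mul_of_nonneg_left (hln t ht) (hYnonneg t ht)
    have h2 := mul_le_mul_of_nonneg_left (hlog1 t ht) (hYnonneg t ht)
    have h3 := mul_nonneg (Real.exp_pos 1).le (zero_le_one.trans (hlog1 t ht))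
    nlinarith [hineq t ht]
  have hd : ∀ t ∈ Icc 0 T,
      HasDerivAt (fun s => Real.log (Real.exp 1 + Y s) * Real.exp (-2 * s))
        (Y' t / (Real.exp 1 + Y t) * Real.exp (-2 * t)
          + Real.log (Real.exp 1 + Y t) * (Real.exp (-2 * t) * (-2 * 1))) t := fun t ht =>
    (((hderiv t ht).const_add (Real.exp 1)).log (hpos t ht).ne').mul
      (((hasDerivAt_id t).const_mul (-2 : ℝ)).exp)
  have hanti : AntitoneOn (fun s => Real.log (Real.exp 1 + Y s) * Real.exp (-2 * s))
      (Icc 0 T) := by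
    refine antitoneOn_of_deriv_nonpos (convex_Icc 0 T)
      (fun t ht => (hd t ht).continuousAt.continuousWithinAt)
      (fun t ht => (hd t (interior_subset ht)).differentiableAt.differentiableWithinAt) ?_
    intro t ht
    rw [(hd t (interior_subset ht)).deriv]
    nlinarith [mul_le_mul_of_nonneg_right (hkey t (interior_subset ht)) (Real.exp_pos (-2 * t)).le]
  intro t ht
  have h := hanti (left_mem_Icc.mpr hT.le) ht ht.1
  simp only [mul_zero, Real.exp_zero, mul_one] at h
  rw [← Real.log_le_iff_le_exp (hpos t ht)]
  have h4 := mul_le_mul_of_nonneg_right h (Real.exp_pos (2 * t)).le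
  rw [mul_assoc, ← Real.exp_add] at h4
  simpa using h4
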